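/- applyCast preserves blame safety in the EDI′ calculus: if c is an EDI cast with CastBlameSafe c ℓ, a witnesses that c is active, V is a value that is safe for ℓ, then applyCast V c a is safe for ℓ. -/

import Mathlib

/-!
An identity cast returns the value unchanged. For a projection `? ⇒ℓ₂ B` with `B ≠ ?`, the
subtyping `? <: B` is impossible, so blame safety of the cast forces `ℓ ≠ ℓ₂`. The result is
either a cast labelled `ℓ₂` around the content of the wrapped value, which is safe for `ℓ` by
inversion (`EDISafeFor.of_wrap`), or `blame ℓ₂`; both are safe for `ℓ` because `ℓ ≠ ℓ₂`.
-/

set_option maxHeartbeats 1000000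

abbrev Label : Type := ℕ

inductive BaseTy : Type
  | nat | bool | int | unit | bot
deriving DecidableEq

inductive GType : Type
  | base (b : BaseTy)
  | unk
  | arr (A B : GType)
  | prod (A B : GType)
  | sum (A B : GType)
deriving DecidableEq

inductive Atomic : GType → Prop
  | base (b : BaseTy) : Atomic (.base b)
  | unk : Atomic .unk

inductive TyPrec : GType → GType → Prop
  | unk (A : GType) : TyPrec .unk A
  | base (b : BaseTy) : TyPrec (.base b) (.base b)
  | arr : TyPrec A A' → TyPrec B B' → TyPrec (.arr A B) (.arr A' B')
  | prod : TyPrec A A' → TyPrec B B' → TyPrec (.prod A B) (.prod A' B')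
  | sum : TyPrec A A' → TyPrec B B' → TyPrec (.sum A B) (.sum A' B')

inductive CtxPrec : List GType → List GType → Prop
  | nil : CtxPrec [] []
  | cons : TyPrec A A' → CtxPrec Γ Γ' → CtxPrec (A :: Γ) (A' :: Γ')

inductive Consis : GType → GType → Type
  | unkR (A : GType) : Consis A .unk
  | unkL (B : GType) : Consis .unk B
  | base (b : BaseTy) : Consis (.base b) (.base b)
  | arr : Consis A' A → Consis B B' → Consis (.arr A B) (.arr A' B')
  | prod : Consis A A' → Consis B B' → Consis (.prod A B) (.prod A' B')
  | sum : Consis A A' → Consis B B' → Consis (.sum A B) (.sum A' B')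

def Consis.join : ∀ {A B : GType}, Consis A B → GType
  | _, _, .unkR A => A
  | _, _, .unkL B => B
  | _, _, .base b => .base b
  | _, _, .arr c d => .arr c.join d.join
  | _, _, .prod c d => .prod c.join d.join
  | _, _, .sum c d => .sum c.join d.join

def Consis.refl : (A : GType) → Consis A A
  | .unk => .unkR .unk
  | .base b => .base b
  | .arr A B => .arr (Consis.refl A) (Consis.refl B)
  | .prod A B => .prod (Consis.refl A) (Consis.refl B)
  | .sum A B => .sum (Consis.refl A) (Consis.refl B)

def Consis.symm : ∀ {A B : GType}, Consis A B → Consis B A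
  | _, _, .unkR A => .unkL A
  | _, _, .unkL B => .unkR B
  | _, _, .base b => .base b
  | _, _, .arr c d => .arr c.symm d.symm
  | _, _, .prod c d => .prod c.symm d.symm
  | _, _, .sum c d => .sum c.symm d.symm

mutual
def Consis.joinL : ∀ {A B : GType}, (c : Consis A B) → Consis A c.join
  | _, _, .unkR A => Consis.refl A
  | _, _, .unkL B => .unkL B
  | _, _, .base b => .base b
  | _, _, .arr c d => .arr (Consis.joinR c).symm (Consis.joinL d)
  | _, _, .prod c d => .prod (Consis.joinL c) (Consis.joinL d)
  | _, _, .sum c d => .sum (Consis.joinL c) (Consis.joinL d)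

def Consis.joinR : ∀ {A B : GType}, (c : Consis A B) → Consis B c.join
  | _, _, .unkR A => .unkL A
  | _, _, .unkL B => Consis.refl B
  | _, _, .base b => .base b
  | _, _, .arr c d => .arr (Consis.joinL c).symm (Consis.joinR d)
  | _, _, .prod c d => .prod (Consis.joinR c) (Consis.joinR d)
  | _, _, .sum c d => .sum (Consis.joinR c) (Consis.joinR d)
end

inductive GVar : List GType → GType → Type
  | z : GVar (A :: Γ) A
  | s : GVar Γ A → GVar (B :: Γ) A

def GVar.idx : ∀ {Γ A}, GVar Γ A → ℕ
  | _, _, .z => 0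
  | _, _, .s x => x.idx + 1

inductive Prim : GType → Type
  | base (b : BaseTy) : Prim (.base b)
  | fn (b : BaseTy) {A : GType} : Prim A → Prim (.arr (.base b) A)

def BaseTy.rep : BaseTy → Type
  | .nat => ℕ
  | .bool => Bool
  | .int => ℤ
  | .unit => Unit
  | .bot => Empty

def Prim.rep : ∀ {A : GType}, Prim A → Type
  | _, .base b => b.rep
  | _, .fn b p => b.rep → p.rep

/-- A decision procedure for consistency. -/
def decConsis : (A B : GType) → Option (Consis A B)
  | A, .unk => some (.unkR A)
  | .unk, B => some (.unkL B)
  | .base b, .base b' =>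
      if h : b = b' then some (by subst h; exact .base b) else none
  | .arr A B, .arr A' B' =>
      match decConsis A' A, decConsis B B' with
      | some c, some d => some (.arr c d)
      | _, _ => none
  | .prod A B, .prod A' B' =>
      match decConsis A A', decConsis B B' with
      | some c, some d => some (.prod c d)
      | _, _ => none
  | .sum A B, .sum A' B' =>
      match decConsis A A', decConsis B B' with
      | some c, some d => some (.sum c d)
      | _, _ => none
  | _, _ => none
termination_by A B => sizeOf A + sizeOf B
decreasing_by all_goals (simp_wf; omega)

/-- EDI casts: a source type, target type, blame label, and a consistency proof. -/
inductive EDICast : GType → GType → Type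
  | mk (A B : GType) (ℓ : Label) (h : Consis A B) : EDICast A B

/-- Cross casts: casts between two function, two pair, or two sum types. -/
inductive EDICross : ∀ {A B : GType}, EDICast A B → Prop
  | arr {A B C D : GType} {ℓ h} : EDICross (.mk (.arr A B) (.arr C D) ℓ h)
  | prod {A B C D : GType} {ℓ h} : EDICross (.mk (.prod A B) (.prod C D) ℓ h)
  | sum {A B C D : GType} {ℓ h} : EDICross (.mk (.sum A B) (.sum C D) ℓ h)

/-- EDI inert casts: injections `A ⇒ℓ ?` with `A ≠ ?`, and all cross casts. -/
inductive EDIInert : ∀ {A B : GType}, EDICast A B → Prop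
  | inj {A : GType} {ℓ h} : A ≠ .unk → EDIInert (.mk A .unk ℓ h)
  | cross {A B : GType} {c : EDICast A B} : EDICross c → EDIInert c

/-- Subtyping for "D" blame tracking: `?` is the top of the subtyping order. -/
inductive SubD : GType → GType → Prop
  | unk (A : GType) : SubD A .unk
  | base (b : BaseTy) : SubD (.base b) (.base b)
  | arr : SubD C A → SubD B D → SubD (.arr A B) (.arr C D)
  | prod : SubD A C → SubD B D → SubD (.prod A B) (.prod C D)
  | sum : SubD A C → SubD B D → SubD (.sum A B) (.sum C D)

/-- Renamings. -/
def Ren (Γ Δ : List GType) : Type := ∀ A : GType, GVar Γ A → GVar Δ A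

def Ren.ext {Γ Δ : List GType} (ρ : Ren Γ Δ) (B : GType) : Ren (B :: Γ) (B :: Δ) :=
  fun _ x =>
    match x with
    | .z => .z
    | .s y => .s (ρ _ y)

def shiftRen {Γ : List GType} (B : GType) : Ren Γ (B :: Γ) := fun _ x => .s x

/-- Intrinsically-typed terms of the `CC′(⇒)` variant of the Parameterized Cast
Calculus: `case` has binding branches and there is a distinguished wrap
application `M⟪c⟫` for inert casts `c`. -/
inductive Tm' (Cast : GType → GType → Type) (Inert : ∀ A B : GType, Cast A B → Prop) :
    List GType → GType → Type
  | const {Γ : List GType} {A : GType} (p : Prim A) (k : p.rep) : Tm' Cast Inert Γ A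
  | var {Γ A} (x : GVar Γ A) : Tm' Cast Inert Γ A
  | lam {Γ B} (A : GType) (N : Tm' Cast Inert (A :: Γ) B) : Tm' Cast Inert Γ (.arr A B)
  | app {Γ A B} (L : Tm' Cast Inert Γ (.arr A B)) (M : Tm' Cast Inert Γ A) : Tm' Cast Inert Γ B
  | ite {Γ A} (L : Tm' Cast Inert Γ (.base .bool)) (M N : Tm' Cast Inert Γ A) :
      Tm' Cast Inert Γ A
  | cons {Γ A B} (M : Tm' Cast Inert Γ A) (N : Tm' Cast Inert Γ B) : Tm' Cast Inert Γ (.prod A B)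
  | fst {Γ A B} (M : Tm' Cast Inert Γ (.prod A B)) : Tm' Cast Inert Γ A
  | snd {Γ A B} (M : Tm' Cast Inert Γ (.prod A B)) : Tm' Cast Inert Γ B
  | inl {Γ A} (B : GType) (M : Tm' Cast Inert Γ A) : Tm' Cast Inert Γ (.sum A B)
  | inr {Γ B} (A : GType) (M : Tm' Cast Inert Γ B) : Tm' Cast Inert Γ (.sum A B)
  | case {Γ A B C} (L : Tm' Cast Inert Γ (.sum A B))
      (M : Tm' Cast Inert (A :: Γ) C) (N : Tm' Cast Inert (B :: Γ) C) : Tm' Cast Inert Γ C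
  | cast {Γ A B} (M : Tm' Cast Inert Γ A) (c : Cast A B) : Tm' Cast Inert Γ B
  | wrap {Γ A B} (M : Tm' Cast Inert Γ A) (c : Cast A B) (i : Inert A B c) : Tm' Cast Inert Γ B
  | blame {Γ} (A : GType) (ℓ : Label) : Tm' Cast Inert Γ A

def Tm'.rename {Cast Inert} :
    ∀ {Γ Δ : List GType} {A : GType}, Ren Γ Δ → Tm' Cast Inert Γ A → Tm' Cast Inert Δ A
  | _, _, _, _, .const p k => .const p k
  | _, _, _, ρ, .var x => .var (ρ _ x)
  | _, _, _, ρ, .lam A N => .lam A (N.rename (ρ.ext _))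
  | _, _, _, ρ, .app L M => .app (L.rename ρ) (M.rename ρ)
  | _, _, _, ρ, .ite L M N => .ite (L.rename ρ) (M.rename ρ) (N.rename ρ)
  | _, _, _, ρ, .cons M N => .cons (M.rename ρ) (N.rename ρ)
  | _, _, _, ρ, .fst M => .fst (M.rename ρ)
  | _, _, _, ρ, .snd M => .snd (M.rename ρ)
  | _, _, _, ρ, .inl B M => .inl B (M.rename ρ)
  | _, _, _, ρ, .inr A M => .inr A (M.rename ρ)
  | _, _, _, ρ, .case L M N => .case (L.rename ρ) (M.rename (ρ.ext _)) (N.rename (ρ.ext _))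
  | _, _, _, ρ, .cast M c => .cast (M.rename ρ) c
  | _, _, _, ρ, .wrap M c i => .wrap (M.rename ρ) c i
  | _, _, _, _, .blame A ℓ => .blame A ℓ

def Subst' (Cast : GType → GType → Type) (Inert : ∀ A B : GType, Cast A B → Prop)
    (Γ Δ : List GType) : Type :=
  ∀ A : GType, GVar Γ A → Tm' Cast Inert Δ A

def Subst'.exts {Cast Inert} {Γ Δ : List GType} (σ : Subst' Cast Inert Γ Δ) (B : GType) :
    Subst' Cast Inert (B :: Γ) (B :: Δ) :=
  fun _ x =>
    match x with
    | .z => .var .z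
    | .s y => (σ _ y).rename (shiftRen B)

def Tm'.subst {Cast Inert} :
    ∀ {Γ Δ : List GType} {A : GType}, Subst' Cast Inert Γ Δ → Tm' Cast Inert Γ A →
      Tm' Cast Inert Δ A
  | _, _, _, _, .const p k => .const p k
  | _, _, _, σ, .var x => σ _ x
  | _, _, _, σ, .lam A N => .lam A (N.subst (σ.exts _))
  | _, _, _, σ, .app L M => .app (L.subst σ) (M.subst σ)
  | _, _, _, σ, .ite L M N => .ite (L.subst σ) (M.subst σ) (N.subst σ)
  | _, _, _, σ, .cons M N => .cons (M.subst σ) (N.subst σ)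
  | _, _, _, σ, .fst M => .fst (M.subst σ)
  | _, _, _, σ, .snd M => .snd (M.subst σ)
  | _, _, _, σ, .inl B M => .inl B (M.subst σ)
  | _, _, _, σ, .inr A M => .inr A (M.subst σ)
  | _, _, _, σ, .case L M N => .case (L.subst σ) (M.subst (σ.exts _)) (N.subst (σ.exts _))
  | _, _, _, σ, .cast M c => .cast (M.subst σ) c
  | _, _, _, σ, .wrap M c i => .wrap (M.subst σ) c i
  | _, _, _, _, .blame A ℓ => .blame A ℓ

def substZero' {Cast Inert} {Γ : List GType} {B : GType} (N : Tm' Cast Inert Γ B) :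
    Subst' Cast Inert (B :: Γ) Γ :=
  fun _ x =>
    match x with
    | .z => N
    | .s y => .var y

def Tm'.subst1 {Cast Inert} {Γ : List GType} {A B : GType}
    (M : Tm' Cast Inert (B :: Γ) A) (N : Tm' Cast Inert Γ B) : Tm' Cast Inert Γ A :=
  M.subst (substZero' N)

/-- Evaluation frames for `CC′(⇒)`. -/
inductive Frame' (Cast : GType → GType → Type) (Inert : ∀ A B : GType, Cast A B → Prop)
    (Val : ∀ {Γ : List GType} {A : GType}, Tm' Cast Inert Γ A → Prop)
    (Γ : List GType) : GType → GType → Type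
  | appL {A B} (M : Tm' Cast Inert Γ A) : Frame' Cast Inert Val Γ (.arr A B) B
  | appR {A B} (L : Tm' Cast Inert Γ (.arr A B)) (h : Val L) : Frame' Cast Inert Val Γ A B
  | ite {A} (M N : Tm' Cast Inert Γ A) : Frame' Cast Inert Val Γ (.base .bool) A
  | consR {A B} (M : Tm' Cast Inert Γ A) (h : Val M) : Frame' Cast Inert Val Γ B (.prod A B)
  | consL {A B} (N : Tm' Cast Inert Γ B) : Frame' Cast Inert Val Γ A (.prod A B)
  | fst {A B} : Frame' Cast Inert Val Γ (.prod A B) A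
  | snd {A B} : Frame' Cast Inert Val Γ (.prod A B) B
  | inl {A} (B : GType) : Frame' Cast Inert Val Γ A (.sum A B)
  | inr {B} (A : GType) : Frame' Cast Inert Val Γ B (.sum A B)
  | case {A B C} (M : Tm' Cast Inert (A :: Γ) C) (N : Tm' Cast Inert (B :: Γ) C) :
      Frame' Cast Inert Val Γ (.sum A B) C
  | cast {A B} (c : Cast A B) : Frame' Cast Inert Val Γ A B

def plug' {Cast Inert Val} {Γ : List GType} {A B : GType} :
    Tm' Cast Inert Γ A → Frame' Cast Inert Val Γ A B → Tm' Cast Inert Γ B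
  | M, .appL N => .app M N
  | M, .appR L _ => .app L M
  | M, .ite M₁ N₁ => .ite M M₁ N₁
  | M, .consR M₁ _ => .cons M₁ M
  | M, .consL N => .cons M N
  | M, .fst => .fst M
  | M, .snd => .snd M
  | M, .inl B => .inl B M
  | M, .inr A => .inr A M
  | M, .case M₁ N₁ => .case M M₁ N₁
  | M, .cast c => .cast M c

/-- EDI active casts (as data, so that `applyCast` can compute by cases on it):
identity casts on atomic types and projections. -/
inductive EDIActive : ∀ {A B : GType}, EDICast A B → Type
  | id {a : GType} {ℓ h} : Atomic a → EDIActive (.mk a a ℓ h)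
  | proj {B : GType} {ℓ h} : B ≠ .unk → EDIActive (.mk .unk B ℓ h)

abbrev EDIInert' : ∀ A B : GType, EDICast A B → Prop := fun _ _ c => EDIInert c

/-- Terms of the EDI′ calculus: `CC′(⇒)` instantiated with EDI casts. -/
abbrev EDITm' : List GType → GType → Type := Tm' EDICast EDIInert'

/-- Values of EDI′ (as data, so that `applyCast` can compute by cases on it). -/
inductive EDIValue : ∀ {Γ : List GType} {A : GType}, EDITm' Γ A → Type
  | lam {Γ A B} {N : EDITm' (A :: Γ) B} : EDIValue (.lam A N)
  | const {Γ A} {p : Prim A} {k : p.rep} : EDIValue (.const (Γ := Γ) p k)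
  | pair {Γ A B} {M : EDITm' Γ A} {N : EDITm' Γ B} :
      EDIValue M → EDIValue N → EDIValue (.cons M N)
  | inl {Γ A B} {M : EDITm' Γ A} : EDIValue M → EDIValue (.inl (Γ := Γ) B M)
  | inr {Γ A B} {M : EDITm' Γ B} : EDIValue M → EDIValue (.inr (Γ := Γ) A M)
  | wrap {Γ A B} {M : EDITm' Γ A} {c : EDICast A B} {i : EDIInert c} :
      EDIValue M → EDIValue (.wrap M c i)

/-- `applyCast` for EDI′: identity casts return the value; a projection applied
to a value `V ⟪A ⇒ℓ₁ ?⟫` yields `V ⟨A ⇒ℓ₂ B⟩` if `A ∼ B` and `blame ℓ₂`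
otherwise. -/
def applyCast {Γ : List GType} {A B : GType} (V : EDITm' Γ A) (v : EDIValue V)
    (c : EDICast A B) (a : EDIActive c) : EDITm' Γ B :=
  match a, v with
  | .id _, _ => V
  | .proj (B := B') (ℓ := ℓ₂) _, .wrap (A := A₁) (M := M) _ =>
      match decConsis A₁ B' with
      | some hc => .cast M (.mk A₁ B' ℓ₂ hc)
      | none => .blame B' ℓ₂
  | .proj _, .const (p := p) => nomatch p

/-- Blame-safety of an EDI cast w.r.t. a label. -/
inductive EDICastBlameSafe : ∀ {A B : GType}, EDICast A B → Label → Prop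
  | sub {A B : GType} {ℓ : Label} {h : Consis A B} :
      SubD A B → EDICastBlameSafe (.mk A B ℓ h) ℓ
  | neq {A B : GType} {ℓ ℓ' : Label} {h : Consis A B} :
      ℓ ≠ ℓ' → EDICastBlameSafe (.mk A B ℓ' h) ℓ

/-- The "safe for" predicate for EDI′ terms. -/
inductive EDISafeFor : ∀ {Γ : List GType} {A : GType}, EDITm' Γ A → Label → Prop
  | const {Γ A} {p : Prim A} {k : p.rep} {ℓ} : EDISafeFor (.const (Γ := Γ) p k) ℓ
  | var {Γ A} {x : GVar Γ A} {ℓ} : EDISafeFor (.var x) ℓ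
  | lam {Γ A B} {N : EDITm' (A :: Γ) B} {ℓ} : EDISafeFor N ℓ → EDISafeFor (.lam A N) ℓ
  | app {Γ A B} {L : EDITm' Γ (.arr A B)} {M : EDITm' Γ A} {ℓ} :
      EDISafeFor L ℓ → EDISafeFor M ℓ → EDISafeFor (.app L M) ℓ
  | ite {Γ A} {L : EDITm' Γ (.base .bool)} {M N : EDITm' Γ A} {ℓ} :
      EDISafeFor L ℓ → EDISafeFor M ℓ → EDISafeFor N ℓ → EDISafeFor (.ite L M N) ℓ
  | cons {Γ A B} {M : EDITm' Γ A} {N : EDITm' Γ B} {ℓ} :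
      EDISafeFor M ℓ → EDISafeFor N ℓ → EDISafeFor (.cons M N) ℓ
  | fst {Γ A B} {M : EDITm' Γ (.prod A B)} {ℓ} : EDISafeFor M ℓ → EDISafeFor (.fst M) ℓ
  | snd {Γ A B} {M : EDITm' Γ (.prod A B)} {ℓ} : EDISafeFor M ℓ → EDISafeFor (.snd M) ℓ
  | inl {Γ A B} {M : EDITm' Γ A} {ℓ} : EDISafeFor M ℓ → EDISafeFor (.inl (Γ := Γ) B M) ℓ
  | inr {Γ A B} {M : EDITm' Γ B} {ℓ} : EDISafeFor M ℓ → EDISafeFor (.inr (Γ := Γ) A M) ℓ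
  | case {Γ A B C} {L : EDITm' Γ (.sum A B)} {M : EDITm' (A :: Γ) C} {N : EDITm' (B :: Γ) C} {ℓ} :
      EDISafeFor L ℓ → EDISafeFor M ℓ → EDISafeFor N ℓ → EDISafeFor (.case L M N) ℓ
  | cast {Γ A B} {M : EDITm' Γ A} {c : EDICast A B} {ℓ} :
      EDICastBlameSafe c ℓ → EDISafeFor M ℓ → EDISafeFor (.cast M c) ℓ
  | wrap {Γ A B} {M : EDITm' Γ A} {c : EDICast A B} {i : EDIInert c} {ℓ} :
      EDICastBlameSafe c ℓ → EDISafeFor M ℓ → EDISafeFor (.wrap M c i) ℓ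
  | blame {Γ A} {ℓ ℓ' : Label} : ℓ ≠ ℓ' → EDISafeFor (.blame (Γ := Γ) A ℓ') ℓ

theorem EDISafeFor.of_wrap {Γ : List GType} {A B : GType} {M : EDITm' Γ A} {c : EDICast A B}
    {i : EDIInert c} {ℓ : Label} (h : EDISafeFor (.wrap M c i) ℓ) : EDISafeFor M ℓ := by
  cases h with
  | wrap _ hM => exact hM

/-- Lemma 5.11: `applyCast` preserves blame safety in EDI′. -/
theorem applyCast_preserves_blame_safety {Γ : List GType} {A B : GType}
    (V : EDITm' Γ A) (v : EDIValue V) (c : EDICast A B) (a : EDIActive c) (ℓ : Label)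
    (hc : EDICastBlameSafe c ℓ) (hV : EDISafeFor V ℓ) :
    EDISafeFor (applyCast V v c a) ℓ := by
  cases a with
  | id _ => simpa only [applyCast] using hV
  | @proj _ ℓ₂ _ hB =>
    -- The only supertype of `?` is `?` itself, so safety of `? ⇒ B` with `B ≠ ?` comes from
    -- the labels being different.
    have hne : ℓ ≠ ℓ₂ := by
      cases hc with
      | sub hs => cases hs; exact absurd rfl hB
      | neq hn => exact hn
    cases v with
    | const => rename_i p _; nomatch p
    | wrap w =>
      have hM := hV.of_wrap
      simp only [applyCast]
      split
      · exact .cast (.neq hne) hM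
      · exact .blame hne
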